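/- arXiv:1505.02155 — 2 statements merged into one kernel-verified Lean document; each statement's English description precedes it below -/
import Mathlib

section
/- Let k ≥ 2 be an integer, let t_1,…,t_k be reals with 0 < t_1 ≤ t_2 ≤ ⋯ ≤ t_k, let C_k > 0, and let α > 0, β > 0. For each i = 1,…,k−1 let α_i, β_i, U_i be reals with 0 < α_i ≤ α, 0 < β_i ≤ β, and 0 < U_i ≤ 1. If C_k/t_k + Σ_{i=1}^{k−1} U_i ≤ ((k−1)·((α+β)^{1/k} − 1) + ((α+β)^{1/k} − α))/β, then there exists an index j ∈ {1,…,k} such that C_k + Σ_{i=1}^{k−1} α_i·t_i·U_i + Σ_{i=1}^{j−1} β_i·t_i·U_i ≤ t_j. -/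
/-!
Suppose every test fails. With `S = C + a * ∑ U i * t i` and `Q j = S + b * ∑_{i < j} U i * t i`,
failure at `j` forces `t j < Q j`, so passing from `j` to `j + 1` multiplies `Q` by at most
`1 + b * U j`, while failure at `k` bounds `(a + b) * S / Q k = a + b * (C / Q k)` strictly above by
`a + b * (C / t k)`. Multiplying, `a + b < (a + b * (C / t k)) * ∏ (1 + b * U i)`.
The bound on the total utilization says that these `k` factors have arithmetic mean at most
`(a + b) ^ (1 / k)`, so AM-GM contradicts the last inequality.
-/

open Finset

section ArithmeticGeometricMean

variable {ι : Type*} {s : Finset ι} {z : ι → ℝ} {x r : ℝ}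

theorem prod_le_pow_card_of_sum_le_card_mul (hz : ∀ i ∈ s, 0 ≤ z i)
    (hsum : ∑ i ∈ s, z i ≤ #s * r) : ∏ i ∈ s, z i ≤ r ^ #s := by
  rcases s.eq_empty_or_nonempty with rfl | hs
  · simp
  have hcard : (0 : ℝ) < #s := by exact_mod_cast hs.card_pos
  have hprod : 0 ≤ ∏ i ∈ s, z i := prod_nonneg hz
  have amgm : (∏ i ∈ s, z i) ^ (#s : ℝ)⁻¹ ≤ (∑ i ∈ s, z i) / #s := by
    simpa using Real.geom_mean_le_arith_mean s (fun _ ↦ 1) z (by simp) (by simpa using hs) hz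
  calc ∏ i ∈ s, z i
    _ = ((∏ i ∈ s, z i) ^ (#s : ℝ)⁻¹) ^ #s :=
      (Real.rpow_inv_natCast_pow hprod hs.card_ne_zero).symm
    _ ≤ r ^ #s := by
      gcongr
      exact amgm.trans ((div_le_iff₀' hcard).2 hsum)

theorem mul_prod_le_pow_card_add_one_of_add_sum_le (hx : 0 ≤ x) (hz : ∀ i ∈ s, 0 ≤ z i)
    (hsum : x + ∑ i ∈ s, z i ≤ (#s + 1) * r) : x * ∏ i ∈ s, z i ≤ r ^ (#s + 1) := by
  rw [mul_prod_eq_prod_insertNone, ← card_insertNone]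
  refine prod_le_pow_card_of_sum_le_card_mul (fun o ho ↦ ?_) ?_
  · cases o with
    | none => exact hx
    | some i => exact hz i (some_mem_insertNone.1 ho)
  · rw [← add_sum_eq_sum_insertNone, card_insertNone]
    exact_mod_cast hsum

end ArithmeticGeometricMean

theorem sum_mul_le_mul_sum_of_le {ι R : Type*} [Semiring R] [PartialOrder R] [IsOrderedRing R]
    {s : Finset ι} {w x : ι → R} {c : R} (hw : ∀ i ∈ s, w i ≤ c) (hx : ∀ i ∈ s, 0 ≤ x i) :
    ∑ i ∈ s, w i * x i ≤ c * ∑ i ∈ s, x i := by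
  rw [mul_sum]
  exact sum_le_sum fun i hi ↦ mul_le_mul_of_nonneg_right (hw i hi) (hx i hi)

theorem add_sum_mul_le_mul_prod_one_add {ι R : Type*} [LinearOrder ι] [CommSemiring R]
    [PartialOrder R] [IsOrderedRing R] {s : Finset ι} {u t : ι → R} {c : R}
    (hu : ∀ i ∈ s, 0 ≤ u i) (ht : ∀ i ∈ s, t i ≤ c + ∑ j ∈ s with j < i, u j * t j) :
    c + ∑ i ∈ s, u i * t i ≤ c * ∏ i ∈ s, (1 + u i) := by
  induction s using Finset.induction_on_max with
  | empty => simp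
  | insert m s hm ih =>
    have hms : m ∉ s := fun hmem ↦ (hm m hmem).false
    have below_max : {j ∈ insert m s | j < m} = s := by grind
    have below_mem : ∀ i ∈ s, {j ∈ insert m s | j < i} = {j ∈ s | j < i} := by grind
    have hum : 0 ≤ u m := hu m (mem_insert_self m s)
    have htm : t m ≤ c + ∑ i ∈ s, u i * t i := by
      simpa only [below_max] using ht m (mem_insert_self m s)
    have bound_below : c + ∑ i ∈ s, u i * t i ≤ c * ∏ i ∈ s, (1 + u i) :=
      ih (fun i hi ↦ hu i (mem_insert_of_mem hi))
        fun i hi ↦ below_mem i hi ▸ ht i (mem_insert_of_mem hi)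
    calc c + ∑ i ∈ insert m s, u i * t i
      _ = (c + ∑ i ∈ s, u i * t i) + u m * t m := by
        rw [sum_insert hms, add_comm (u m * t m), add_assoc]
      _ ≤ (c + ∑ i ∈ s, u i * t i) + u m * (c + ∑ i ∈ s, u i * t i) := by gcongr
      _ = (1 + u m) * (c + ∑ i ∈ s, u i * t i) := by ring
      _ ≤ (1 + u m) * (c * ∏ i ∈ s, (1 + u i)) :=
        mul_le_mul_of_nonneg_left bound_below (add_nonneg zero_le_one hum)
      _ = c * ∏ i ∈ insert m s, (1 + u i) := by rw [prod_insert hms]; ring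

section HyperbolicBound

variable {K : Type*} [Field K] [LinearOrder K] [IsStrictOrderedRing K]

theorem add_lt_mul_prod_one_add_of_forall_lt {ι : Type*} [LinearOrder ι] {s : Finset ι}
    {t U : ι → K} {a b C T : K} (ha : 0 ≤ a) (hb : 0 < b) (hC : 0 < C) (hT : 0 < T)
    (hU : ∀ i ∈ s, 0 ≤ U i) (ht : ∀ i ∈ s, 0 ≤ t i)
    (hlt : ∀ i ∈ s, t i < C + a * ∑ j ∈ s, U j * t j + b * ∑ j ∈ s with j < i, U j * t j)
    (hTlt : T < C + a * ∑ j ∈ s, U j * t j + b * ∑ j ∈ s, U j * t j) :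
    a + b < (a + b * (C / T)) * ∏ i ∈ s, (1 + b * U i) := by
  set V := ∑ j ∈ s, U j * t j
  have hVnonneg : 0 ≤ V := sum_nonneg fun i hi ↦ mul_nonneg (hU i hi) (ht i hi)
  have hS : 0 < C + a * V := by positivity
  have growth : C + a * V + b * V ≤ (C + a * V) * ∏ i ∈ s, (1 + b * U i) := by
    have := add_sum_mul_le_mul_prod_one_add (s := s) (u := fun i ↦ b * U i) (t := t)
      (c := C + a * V) (fun i hi ↦ mul_nonneg hb.le (hU i hi))
      (fun i hi ↦ by simpa only [mul_assoc, ← mul_sum] using (hlt i hi).le)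
    simpa only [mul_assoc, ← mul_sum] using this
  calc a + b
    _ = (a + b * (C / (C + a * V + b * V))) * ((C + a * V + b * V) / (C + a * V)) := by
      field_simp
      ring
    _ < (a + b * (C / T)) * ((C + a * V + b * V) / (C + a * V)) := by gcongr
    _ ≤ (a + b * (C / T)) * ∏ i ∈ s, (1 + b * U i) := by
      gcongr
      exact (div_le_iff₀' hS).2 growth

theorem exists_add_sum_add_sum_le_of_hyperbolic_bound {k : ℕ} (hk : 1 ≤ k) {t α β U : ℕ → K}
    {a b C : K} (ht : ∀ i ∈ Icc 1 k, 0 < t i) (hC : 0 < C) (ha : 0 ≤ a) (hb : 0 < b)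
    (hα : ∀ i ∈ Icc 1 (k - 1), α i ≤ a) (hβ : ∀ i ∈ Icc 1 (k - 1), β i ≤ b)
    (hU : ∀ i ∈ Icc 1 (k - 1), 0 ≤ U i)
    (hyperbolic : (a + b * (C / t k)) * ∏ i ∈ Icc 1 (k - 1), (1 + b * U i) ≤ a + b) :
    ∃ j ∈ Icc 1 k, C + (∑ i ∈ Icc 1 (k - 1), α i * t i * U i)
      + (∑ i ∈ Icc 1 (j - 1), β i * t i * U i) ≤ t j := by
  by_contra! fails
  have hkmem : k ∈ Icc 1 k := right_mem_Icc.2 hk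
  have htpos : ∀ i ∈ Icc 1 (k - 1), 0 < t i := fun i hi ↦ ht i (by grind)
  have hUt : ∀ i ∈ Icc 1 (k - 1), 0 ≤ U i * t i :=
    fun i hi ↦ mul_nonneg (hU i hi) (htpos i hi).le
  have fails_uniform : ∀ j ∈ Icc 1 k, t j < C + a * ∑ i ∈ Icc 1 (k - 1), U i * t i
      + b * ∑ i ∈ Icc 1 (j - 1), U i * t i := by
    intro j hj
    have hsub : Icc 1 (j - 1) ⊆ Icc 1 (k - 1) := by grind
    refine (fails j hj).trans_le ?_
    simp only [mul_assoc, mul_comm (t _)]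
    gcongr
    · exact sum_mul_le_mul_sum_of_le hα hUt
    · exact sum_mul_le_mul_sum_of_le (fun i hi ↦ hβ i (hsub hi)) fun i hi ↦ hUt i (hsub hi)
  have below : ∀ j ∈ Icc 1 (k - 1), {i ∈ Icc 1 (k - 1) | i < j} = Icc 1 (j - 1) := by grind
  refine hyperbolic.not_gt <| add_lt_mul_prod_one_add_of_forall_lt ha hb hC (ht k hkmem) hU
    (fun i hi ↦ (htpos i hi).le) (fun j hj ↦ ?_) (fails_uniform k hkmem)
  rw [below j hj]
  exact fails_uniform j (by grind)

end HyperbolicBound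

theorem hyperbolic_bound_of_total_utilization_bound {k : ℕ} (hk : 1 ≤ k) {U : ℕ → ℝ} {a b v : ℝ}
    (ha : 0 ≤ a) (hb : 0 < b) (hv : 0 ≤ v) (hU : ∀ i ∈ Icc 1 (k - 1), 0 ≤ U i)
    (hcond : v + ∑ i ∈ Icc 1 (k - 1), U i ≤
      (((k : ℝ) - 1) * ((a + b) ^ ((1 : ℝ) / (k : ℝ)) - 1)
        + ((a + b) ^ ((1 : ℝ) / (k : ℝ)) - a)) / b) :
    (a + b * v) * ∏ i ∈ Icc 1 (k - 1), (1 + b * U i) ≤ a + b := by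
  set r : ℝ := (a + b) ^ ((1 : ℝ) / (k : ℝ)) with hr
  have hcard : #(Icc 1 (k - 1)) + 1 = k := by rw [Nat.card_Icc]; omega
  have hcard_cast : (#(Icc 1 (k - 1)) : ℝ) + 1 = k := by exact_mod_cast hcard
  have sum_factors : a + b * v + ∑ i ∈ Icc 1 (k - 1), (1 + b * U i)
      ≤ (#(Icc 1 (k - 1)) + 1) * r := by
    rw [sum_add_distrib, ← mul_sum, sum_const, nsmul_one]
    rw [le_div_iff₀ hb] at hcond
    linear_combination hcond + (1 - r) * hcard_cast
  calc (a + b * v) * ∏ i ∈ Icc 1 (k - 1), (1 + b * U i)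
    _ ≤ r ^ (#(Icc 1 (k - 1)) + 1) :=
      mul_prod_le_pow_card_add_one_of_add_sum_le (by positivity)
        (fun i hi ↦ by have := hU i hi; positivity) sum_factors
    _ = a + b := by
      rw [hcard, hr, one_div, Real.rpow_inv_natCast_pow (by positivity) (by omega)]

theorem k2u_total_utilization_bound_general {k : ℕ} (hk : 1 ≤ k) {t α β U : ℕ → ℝ}
    {C a b : ℝ} (ht : ∀ i ∈ Icc 1 k, 0 < t i) (hC : 0 < C) (ha : 0 ≤ a) (hb : 0 < b)
    (hα : ∀ i ∈ Icc 1 (k - 1), α i ≤ a) (hβ : ∀ i ∈ Icc 1 (k - 1), β i ≤ b)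
    (hU : ∀ i ∈ Icc 1 (k - 1), 0 ≤ U i)
    (hcond : C / t k + (∑ i ∈ Icc 1 (k - 1), U i) ≤
      (((k : ℝ) - 1) * ((a + b) ^ ((1 : ℝ) / (k : ℝ)) - 1)
        + ((a + b) ^ ((1 : ℝ) / (k : ℝ)) - a)) / b) :
    ∃ j ∈ Icc 1 k, C + (∑ i ∈ Icc 1 (k - 1), α i * t i * U i)
      + (∑ i ∈ Icc 1 (j - 1), β i * t i * U i) ≤ t j :=
  exists_add_sum_add_sum_le_of_hyperbolic_bound hk ht hC ha hb hα hβ hU <|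
    hyperbolic_bound_of_total_utilization_bound hk ha hb
      (div_pos hC (ht k (right_mem_Icc.2 hk))).le hU hcond

/-- k²U framework, total-utilization-bound lemma (Lemma 2). -/
theorem k2u_total_utilization_bound (k : ℕ) (hk : 2 ≤ k)
    (t : ℕ → ℝ) (ht1 : 0 < t 1)
    (htmono : ∀ i j : ℕ, 1 ≤ i → i ≤ j → j ≤ k → t i ≤ t j)
    (Ck : ℝ) (hCk : 0 < Ck)
    (a b : ℝ) (ha : 0 < a) (hb : 0 < b)
    (α β U : ℕ → ℝ)
    (hα : ∀ i ∈ Finset.Icc 1 (k - 1), 0 < α i ∧ α i ≤ a)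
    (hβ : ∀ i ∈ Finset.Icc 1 (k - 1), 0 < β i ∧ β i ≤ b)
    (hU : ∀ i ∈ Finset.Icc 1 (k - 1), 0 < U i ∧ U i ≤ 1)
    (hcond : Ck / t k + (∑ i ∈ Finset.Icc 1 (k - 1), U i) ≤
      (((k : ℝ) - 1) * ((a + b) ^ ((1 : ℝ) / (k : ℝ)) - 1)
        + ((a + b) ^ ((1 : ℝ) / (k : ℝ)) - a)) / b) :
    ∃ j ∈ Finset.Icc 1 k,
      Ck + (∑ i ∈ Finset.Icc 1 (k - 1), α i * t i * U i)
        + (∑ i ∈ Finset.Icc 1 (j - 1), β i * t i * U i) ≤ t j :=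
  k2u_total_utilization_bound_general (by omega)
    (fun i hi ↦ ht1.trans_le (htmono 1 i le_rfl (mem_Icc.1 hi).1 (mem_Icc.1 hi).2)) hCk ha.le hb
    (fun i hi ↦ (hα i hi).2) (fun i hi ↦ (hβ i hi).2) (fun i hi ↦ (hU i hi).1.le) hcond
end

section
/- Let M ≥ 1 and k ≥ 2 be integers, let T_k > 0 and C_k > 0 be reals, and let the higher-priority tasks i = 1,…,k−1 have periods T_i with 0 < T_i ≤ T_k, execution times C_i ≥ 0, and utilizations U_i = C_i/T_i. If (C_k/T_k + 2)·∏_{i=1}^{k−1} (U_i/M + 1) ≤ 3, or if Σ_{i=1}^{k−1} U_i/M ≤ ln( 3/(C_k/T_k + 2) ), then there exists a real t with 0 < t ≤ T_k such that C_k + (1/M)·Σ_{i=1}^{k−1} (⌈t/T_i⌉ + 1)·C_i ≤ t. -/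
/-!
It is enough to test the inequality at the last releases `t i = ⌊D / T i⌋ * T i` before the deadline
`D`, and at `D` itself. Since `⌊D / T i⌋ ≥ 1`, the demand `(⌈x / T i⌉ + b) * C i` of task `i` is at
most `(b + 1) * U i * t i` for `x ≤ t i`, plus another `U i * t i` once `x` has passed `t i`. If the
inequality failed at all these points, then, in increasing order of the `t i`, each `t j` would be
bounded by a constant plus the sum of `U i / M * t i` over the earlier `i`. By this Grönwall-type
recursion each task multiplies the total demand by at most `U i / M + 1`, and under the hyperbolic
bound the resulting product is too small for the total to exceed `D`.
-/

open Finset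

section HyperbolicBound

variable {ι K : Type*} {s : Finset ι} {u t : ι → K}

theorem add_sum_mul_le_mul_prod_add_one [CommSemiring K] [LinearOrder K] [IsOrderedRing K] {B : K}
    (hu : ∀ i ∈ s, 0 ≤ u i) (ht : ∀ i ∈ s, 0 ≤ t i)
    (h : ∀ j ∈ s, t j ≤ B + ∑ i ∈ s with t i < t j, u i * t i) :
    B + ∑ i ∈ s, u i * t i ≤ B * ∏ i ∈ s, (u i + 1) := by
  classical
  induction s using Finset.induction_on_max_value t with
  | empty => simp
  | insert a s ha hmax ih =>
    have not_lt_of_mem : ∀ j ∈ insert a s, ¬t a < t j := by simpa using hmax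
    have hfilter : ∀ j ∈ insert a s, {i ∈ insert a s | t i < t j} = {i ∈ s | t i < t j} :=
      fun j hj => by rw [filter_insert, if_neg (not_lt_of_mem j hj)]
    have h' : ∀ j ∈ insert a s, t j ≤ B + ∑ i ∈ s with t i < t j, u i * t i :=
      fun j hj => hfilter j hj ▸ h j hj
    rw [forall_mem_insert] at hu ht h'
    obtain ⟨hua, hus⟩ := hu
    have ht_le : t a ≤ B + ∑ i ∈ s, u i * t i :=
      h'.1.trans <| add_le_add le_rfl <| sum_le_sum_of_subset_of_nonneg (filter_subset _ _)
        fun i hi _ => mul_nonneg (hus i hi) (ht.2 i hi)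
    rw [sum_insert ha, prod_insert ha]
    calc B + (u a * t a + ∑ i ∈ s, u i * t i)
        ≤ B + (u a * (B + ∑ i ∈ s, u i * t i) + ∑ i ∈ s, u i * t i) := by gcongr
      _ = (u a + 1) * (B + ∑ i ∈ s, u i * t i) := by ring
      _ ≤ (u a + 1) * (B * ∏ i ∈ s, (u i + 1)) :=
          mul_le_mul_of_nonneg_left (ih hus ht.2 h'.2) (add_nonneg hua zero_le_one)
      _ = B * ((u a + 1) * ∏ i ∈ s, (u i + 1)) := by ring

variable [Field K] [LinearOrder K] [IsStrictOrderedRing K] {C D r : K}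

theorem add_mul_add_le_of_div_add_mul_le {A P : K} (hC : 0 < C) (hD : 0 < D)
    (hr : 0 ≤ r) (hA : 0 ≤ A)
    (hP : (C / D + r) * P ≤ r + 1) (hAP : C + r * A + A ≤ (C + r * A) * P) :
    C + r * A + A ≤ D := by
  have hP' : (C + r * D) * P ≤ (r + 1) * D :=
    calc (C + r * D) * P = (C / D + r) * P * D := by field_simp
      _ ≤ (r + 1) * D := by gcongr
  have hprod : (C + r * D) * (C + r * A + A) ≤ (C + r * A) * ((r + 1) * D) :=
    calc (C + r * D) * (C + r * A + A) ≤ (C + r * D) * ((C + r * A) * P) := by gcongr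
      _ = (C + r * A) * ((C + r * D) * P) := by ring
      _ ≤ (C + r * A) * ((r + 1) * D) := by gcongr
  refine le_of_mul_le_mul_left ?_ hC
  linear_combination hprod

/-- The hyperbolic bound of the k²U framework, with `r` in place of the paper's ratio `α / β`
and `u i` in place of `β * U i`. -/
theorem exists_add_sum_le_of_mul_prod_le (hC : 0 < C) (hD : 0 < D) (hr : 0 ≤ r)
    (hu : ∀ i ∈ s, 0 ≤ u i) (ht : ∀ i ∈ s, 0 ≤ t i)
    (h : (C / D + r) * ∏ i ∈ s, (u i + 1) ≤ r + 1) :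
    ∃ x ∈ insert D (t '' s),
      C + r * ∑ i ∈ s, u i * t i + ∑ i ∈ s with t i < x, u i * t i ≤ x := by
  have hut : ∀ i ∈ s, 0 ≤ u i * t i := fun i hi => mul_nonneg (hu i hi) (ht i hi)
  by_contra! hfail
  rw [Set.forall_mem_insert, Set.forall_mem_image] at hfail
  have hgrowth := add_sum_mul_le_mul_prod_add_one hu ht fun j hj => (hfail.2 hj).le
  have hfilter : ∑ i ∈ s with t i < D, u i * t i ≤ ∑ i ∈ s, u i * t i :=
    sum_le_sum_of_subset_of_nonneg (filter_subset _ _) fun i hi _ => hut i hi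
  exact hfail.1.not_ge <| (add_le_add le_rfl hfilter).trans <|
    add_mul_add_le_of_div_add_mul_le hC hD hr (sum_nonneg hut) h hgrowth

end HyperbolicBound

theorem mul_prod_add_one_le_of_sum_le_log {ι : Type*} {s : Finset ι} {u : ι → ℝ} {a c : ℝ}
    (ha : 0 < a) (hc : 0 < c) (hu : ∀ i ∈ s, 0 ≤ u i) (h : ∑ i ∈ s, u i ≤ Real.log (c / a)) :
    a * ∏ i ∈ s, (u i + 1) ≤ c := by
  rw [← le_div_iff₀' ha]
  calc ∏ i ∈ s, (u i + 1) ≤ ∏ i ∈ s, Real.exp (u i) :=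
        prod_le_prod (fun i hi => add_nonneg (hu i hi) zero_le_one)
          fun i _ => Real.add_one_le_exp (u i)
    _ = Real.exp (∑ i ∈ s, u i) := (Real.exp_sum s u).symm
    _ ≤ c / a := (Real.le_log_iff_exp_le (div_pos hc ha)).1 h

section Demand

variable {K : Type*} [Field K] [LinearOrder K] [FloorRing K]

/-- The last release time in `[0, D]` of a task of period `T` released at all multiples of `T`. -/
def lastRelease (D T : K) : K :=
  ⌊D / T⌋ * T

/-- The time-demand function `(⌈x / T⌉ + b) * C` of a task of period `T` and execution time `C`,
where `b` measures the carry-in: `b = 1` is the greedy carry-in `W_i`, and `b = 0` is the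
demand without carry-in. -/
def carryInDemand (b T C x : K) : K :=
  (⌈x / T⌉ + b) * C

variable {b C D T x : K}

theorem div_mul_lastRelease (hT : T ≠ 0) : C / T * lastRelease D T = ⌊D / T⌋ * C := by
  rw [lastRelease]
  field_simp

variable [IsStrictOrderedRing K]

theorem lastRelease_le (hT : 0 < T) : lastRelease D T ≤ D :=
  sub_nonneg.1 (Int.sub_floor_div_mul_nonneg D hT)

theorem one_le_floor_div (hT : 0 < T) (hTD : T ≤ D) : (1 : K) ≤ ⌊D / T⌋ := by
  exact_mod_cast Int.le_floor.2 (by simpa using (one_le_div hT).2 hTD)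

theorem lastRelease_pos (hT : 0 < T) (hTD : T ≤ D) : 0 < lastRelease D T :=
  mul_pos (zero_lt_one.trans_le (one_le_floor_div hT hTD)) hT

theorem ceil_div_le_floor_div_add_one (hT : 0 < T) (hx : x ≤ D) : ⌈x / T⌉ ≤ ⌊D / T⌋ + 1 :=
  (Int.ceil_mono (by gcongr)).trans (Int.ceil_le_floor_add_one _)

theorem ceil_div_le_floor_div (hT : 0 < T) (hx : x ≤ lastRelease D T) : ⌈x / T⌉ ≤ ⌊D / T⌋ :=
  Int.ceil_le.2 ((div_le_iff₀ hT).2 hx)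

theorem carryInDemand_le (hb : 0 ≤ b) (hT : 0 < T) (hTD : T ≤ D) (hC : 0 ≤ C) (hx : x ≤ D) :
    carryInDemand b T C x ≤ (b + 1) * (C / T * lastRelease D T) +
      if lastRelease D T < x then C / T * lastRelease D T else 0 := by
  have hb_le : b ≤ b * ⌊D / T⌋ := le_mul_of_one_le_right hb (one_le_floor_div hT hTD)
  rw [div_mul_lastRelease hT.ne', carryInDemand]
  split_ifs with hlt
  · have hceil : (⌈x / T⌉ : K) ≤ ⌊D / T⌋ + 1 := by
      exact_mod_cast ceil_div_le_floor_div_add_one hT hx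
    calc (⌈x / T⌉ + b) * C ≤ (⌊D / T⌋ + ⌊D / T⌋ + b * ⌊D / T⌋) * C := by
          gcongr
          exact hceil.trans (by gcongr; exact one_le_floor_div hT hTD)
      _ = (b + 1) * (⌊D / T⌋ * C) + ⌊D / T⌋ * C := by ring
  · have hceil : (⌈x / T⌉ : K) ≤ ⌊D / T⌋ := by
      exact_mod_cast ceil_div_le_floor_div hT (not_lt.1 hlt)
    calc (⌈x / T⌉ + b) * C ≤ (⌊D / T⌋ + b * ⌊D / T⌋) * C := by gcongr
      _ = (b + 1) * (⌊D / T⌋ * C) + 0 := by ring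

end Demand

theorem exists_add_sum_carryInDemand_le {ι K : Type*} [Field K] [LinearOrder K]
    [IsStrictOrderedRing K] [FloorRing K] {s : Finset ι} {T C : ι → K} {b m D E : K}
    (hb : 0 ≤ b) (hm : 0 < m) (hD : 0 < D) (hE : 0 < E)
    (hT : ∀ i ∈ s, 0 < T i ∧ T i ≤ D) (hC : ∀ i ∈ s, 0 ≤ C i)
    (h : (E / D + (b + 1)) * ∏ i ∈ s, (C i / T i / m + 1) ≤ b + 2) :
    ∃ x, 0 < x ∧ x ≤ D ∧ E + 1 / m * ∑ i ∈ s, carryInDemand b (T i) (C i) x ≤ x := by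
  let t i := lastRelease D (T i)
  have ht : ∀ i ∈ s, 0 < t i := fun i hi => lastRelease_pos (hT i hi).1 (hT i hi).2
  have hu : ∀ i ∈ s, 0 ≤ C i / T i / m := fun i hi =>
    div_nonneg (div_nonneg (hC i hi) (hT i hi).1.le) hm.le
  obtain ⟨x, hx, hle⟩ := exists_add_sum_le_of_mul_prod_le hE hD (by positivity) hu
    (fun i hi => (ht i hi).le) (h.trans_eq (by ring))
  have hx_mem : 0 < x ∧ x ≤ D := by
    rcases hx with rfl | ⟨j, hj, rfl⟩
    · exact ⟨hD, le_rfl⟩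
    · exact ⟨ht j hj, lastRelease_le (hT j hj).1⟩
  refine ⟨x, hx_mem.1, hx_mem.2, le_trans ?_ hle⟩
  rw [add_assoc, sum_filter, mul_sum, mul_sum, ← sum_add_distrib]
  gcongr with i hi
  calc 1 / m * carryInDemand b (T i) (C i) x
      ≤ 1 / m * ((b + 1) * (C i / T i * t i) + if t i < x then C i / T i * t i else 0) := by
        gcongr
        exact carryInDemand_le hb (hT i hi).1 (hT i hi).2 (hC i hi) hx_mem.2
    _ = (b + 1) * (C i / T i / m * t i) + if t i < x then C i / T i / m * t i else 0 := by
        split_ifs <;> ring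

theorem global_rm_greedy_carry_in_general {ι : Type*} (s : Finset ι) (b m : ℝ) (hb : 0 ≤ b)
    (hm : 0 < m) (Tk Ck : ℝ) (hTk : 0 < Tk) (hCk : 0 < Ck) (T C U : ι → ℝ)
    (hT : ∀ i ∈ s, 0 < T i ∧ T i ≤ Tk) (hC : ∀ i ∈ s, 0 ≤ C i) (hU : ∀ i ∈ s, U i = C i / T i)
    (hcond : (Ck / Tk + (b + 1)) * ∏ i ∈ s, (U i / m + 1) ≤ b + 2 ∨
      ∑ i ∈ s, U i / m ≤ Real.log ((b + 2) / (Ck / Tk + (b + 1)))) :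
    ∃ t : ℝ, 0 < t ∧ t ≤ Tk ∧ Ck + 1 / m * ∑ i ∈ s, carryInDemand b (T i) (C i) t ≤ t := by
  have hu : ∀ i ∈ s, 0 ≤ U i / m := fun i hi =>
    hU i hi ▸ div_nonneg (div_nonneg (hC i hi) (hT i hi).1.le) hm.le
  have hprod : (Ck / Tk + (b + 1)) * ∏ i ∈ s, (U i / m + 1) ≤ b + 2 :=
    hcond.elim id (mul_prod_add_one_le_of_sum_le_log (by positivity) (by positivity) hu)
  refine exists_add_sum_carryInDemand_le hb hm hTk hCk hT hC (hprod.trans_eq' ?_)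
  exact congrArg _ (prod_congr rfl fun i hi => by rw [hU i hi])

/-- Theorem 7: hyperbolic-bound greedy carry-in test for implicit-deadline
sporadic tasks under global RM on M identical processors. -/
theorem global_rm_greedy_carry_in (M k : ℕ) (hM : 1 ≤ M) (hk : 2 ≤ k)
    (Tk Ck : ℝ) (hTk : 0 < Tk) (hCk : 0 < Ck)
    (T C U : ℕ → ℝ)
    (hT : ∀ i ∈ Finset.Icc 1 (k - 1), 0 < T i ∧ T i ≤ Tk)
    (hC : ∀ i ∈ Finset.Icc 1 (k - 1), 0 ≤ C i)
    (hU : ∀ i ∈ Finset.Icc 1 (k - 1), U i = C i / T i)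
    (hcond : (Ck / Tk + 2) * (∏ i ∈ Finset.Icc 1 (k - 1), (U i / (M : ℝ) + 1)) ≤ 3 ∨
      (∑ i ∈ Finset.Icc 1 (k - 1), U i / (M : ℝ)) ≤ Real.log (3 / (Ck / Tk + 2))) :
    ∃ t : ℝ, 0 < t ∧ t ≤ Tk ∧
      Ck + (1 / (M : ℝ)) *
        (∑ i ∈ Finset.Icc 1 (k - 1), ((⌈t / T i⌉ : ℝ) + 1) * C i) ≤ t := by
  have hthree : (1 : ℝ) + 2 = 3 := by norm_num
  exact global_rm_greedy_carry_in_general (Icc 1 (k - 1)) 1 M zero_le_one (Nat.cast_pos.2 hM)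
    Tk Ck hTk hCk T C U hT hC hU (by rwa [one_add_one_eq_two, hthree])
end
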